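/- Ellipsoidal Covering of the Grassmannian (Lemma). There is an absolute constant C > 0 with the following property. Let 1 ≤ r ≤ d be integers and let μ be a probability measure on the set of d×d real symmetric idempotent matrices of rank r (orthogonal projection matrices of rank r) that is invariant under conjugation P ↦ QPQᵀ by every orthogonal matrix Q ∈ O(d); this characterizes the uniform measure on the Grassmannian Gr(d,r). Then for every rank-r orthogonal projection matrix P₀, every ε > 0, and every d×d positive semidefinite Σ with eigenvalues λ_1 ≥ … ≥ λ_d (nonincreasing, with multiplicity): log( 1 / μ{ P : ‖Σ^{1/2}(P₀ − P)‖_op ≤ ε } ) ≤ ((d−r)/2)·Σ_{k=1}^{r} log( C·max{λ_k, ε²}/ε² ) + (r/2)·Σ_{k=1}^{d−r} log( C·max{λ_k, ε²}/ε² ). -/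

import Mathlib

open MeasureTheory
open scoped ENNReal NNReal Matrix MatrixOrder

noncomputable section

/-- The pointwise dimension `log(1/p)` of a (probability) mass `p`, valued in `[0,∞]`,
with the convention `log(1/0) = ∞`. -/
def negLog (p : ℝ≥0∞) : ℝ≥0∞ :=
  if p = 0 then ⊤ else ENNReal.ofReal (Real.log (1 / p.toReal))

/-- The eigenvalues of a symmetric real matrix, listed in nonincreasing order with
multiplicity (junk value `0` if the matrix is not symmetric). -/
def eigDesc {m : ℕ} (G : Matrix (Fin m) (Fin m) ℝ) : Fin m → ℝ :=
  if h : G.IsHermitian then (fun k => (h.eigenvalues ∘ Tuple.sort h.eigenvalues) k.rev) else 0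

/-- The `ℓ² → ℓ²` operator norm of a real matrix. -/
def opNorm {m k : Type*} [Fintype m] [Fintype k] (M : Matrix m k ℝ) : ℝ :=
  sSup {t | ∃ x : k → ℝ, (∑ j, x j ^ 2) ≤ 1 ∧ t = Real.sqrt (∑ i, (M.mulVec x i) ^ 2)}

instance {m n : Type*} : MeasurableSpace (Matrix m n ℝ) :=
  (inferInstance : MeasurableSpace (m → n → ℝ))

/-
Write `P₀ = J Jᵀ` and `1 - P₀ = K Kᵀ` with isometries `J`, `K`, and let `n = d - r`. Frames
`G ∈ ℝ^{d×r}` distributed uniformly on an operator-norm ball have an orthogonally invariant column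
space, so by uniqueness of the invariant measure on an orbit their projections are distributed as a
multiple of `μ`, and `μ` of a neighbourhood of `P₀` can be bounded below by a volume of frames.

The frames used are `G = (J + K S W Tᵀ) X`, where `W` and `X` range over balls and the contractions
`S` and `T` shrink the directions in which `Σ` is large on the ranges of `K` and `J`. Their column
spaces are `ε`-close to that of `J`, and they fill a volume proportional to `|det S|^r |det T|^n`.
By Cauchy interlacing the determinants are controlled by the largest eigenvalues of `Σ`. The volume
comparison costs `6^(r(r+n))`, which the constant absorbs when `r ≤ n`; the case `n < r` follows by
passing to complements `P ↦ 1 - P`.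
-/

section InvariantMeasureUnique

variable {G X : Type*} [Group G] [TopologicalSpace G] [IsTopologicalGroup G] [CompactSpace G]
  [SecondCountableTopology G] [TopologicalSpace X] [SecondCountableTopology X]
  [MeasurableSpace X] [BorelSpace X] [MulAction G X] [ContinuousSMul G X]

/- Average `ρ (g • A)` over Haar measure and exchange the integrals: for each `x = g₀ • x₀` the
inner integral is the Haar measure of a translate of `{g | g⁻¹ • x₀ ∈ A}`. -/
theorem measure_eq_of_ae_mem_orbit (x₀ : X) {A : Set X} (hA : MeasurableSet A) :
    ∃ c : ℝ≥0∞, ∀ ρ : Measure X, IsFiniteMeasure ρ → SMulInvariantMeasure G X ρ →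
      (∀ᵐ x ∂ρ, x ∈ MulAction.orbit G x₀) → ρ A = c * ρ Set.univ := by
  borelize G
  let η : Measure G := Measure.haarMeasure ⊤
  have : IsProbabilityMeasure η :=
    ⟨by simpa using Measure.haarMeasure_self (K₀ := (⊤ : TopologicalSpace.PositiveCompacts G))⟩
  refine ⟨η {g | g⁻¹ • x₀ ∈ A}, fun ρ _ _ hρ => ?_⟩
  let S : Set (X × G) := {p | p.2⁻¹ • p.1 ∈ A}
  have hS : MeasurableSet S :=
    (show Continuous fun p : X × G => p.2⁻¹ • p.1 by fun_prop).measurable hA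
  have integral_over_group : ∀ᵐ x ∂ρ, η (Prod.mk x ⁻¹' S) = η {g | g⁻¹ • x₀ ∈ A} := by
    filter_upwards [hρ]
    rintro _ ⟨g₀, rfl⟩
    rw [← measure_preimage_mul η g₀⁻¹ {g | g⁻¹ • x₀ ∈ A}]
    congr 1
    ext g
    simp [S, mul_smul]
  have integral_over_space (g : G) : ρ ((fun x => (x, g)) ⁻¹' S) = ρ A :=
    measure_preimage_smul ρ g⁻¹ A
  calc ρ A = ∫⁻ g, ρ ((fun x => (x, g)) ⁻¹' S) ∂η := by simp [integral_over_space]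
    _ = ∫⁻ x, η (Prod.mk x ⁻¹' S) ∂ρ := by
      rw [← Measure.prod_apply_symm hS, Measure.prod_apply hS]
    _ = η {g | g⁻¹ • x₀ ∈ A} * ρ Set.univ := by
      rw [lintegral_congr_ae integral_over_group, lintegral_const]

theorem eq_smul_of_ae_mem_orbit {x₀ : X} (μ ν : Measure X) [IsProbabilityMeasure μ]
    [IsFiniteMeasure ν] [SMulInvariantMeasure G X μ] [SMulInvariantMeasure G X ν]
    (hμ : ∀ᵐ x ∂μ, x ∈ MulAction.orbit G x₀) (hν : ∀ᵐ x ∂ν, x ∈ MulAction.orbit G x₀) :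
    ν = ν Set.univ • μ := by
  ext A hA
  obtain ⟨c, hc⟩ := measure_eq_of_ae_mem_orbit (G := G) x₀ hA
  rw [Measure.smul_apply, smul_eq_mul, hc ν ‹_› ‹_› hν, hc μ inferInstance ‹_› hμ,
    measure_univ (μ := μ), mul_one, mul_comm]

end InvariantMeasureUnique

instance {m n : Type*} [Countable m] [Countable n] : BorelSpace (Matrix m n ℝ) :=
  inferInstanceAs (BorelSpace (m → n → ℝ))

instance {m n : Type*} [Countable m] [Countable n] : SecondCountableTopology (Matrix m n ℝ) :=
  inferInstanceAs (SecondCountableTopology (m → n → ℝ))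

section GrassmannianCovering

open scoped Matrix.Norms.L2Operator

section OperatorNorm

variable {l m n p ρ 𝕜 : Type*} [Fintype l] [Fintype m] [Fintype n] [DecidableEq n] [RCLike 𝕜]

theorem l2_opNorm_le_one_of_conjTranspose_mul_self {A : Matrix m n 𝕜} (hA : Aᴴ * A = 1) :
    ‖A‖ ≤ 1 := by
  have norm_one_le : ‖(1 : Matrix n n 𝕜)‖ ≤ 1 := by
    rw [← Matrix.diagonal_one, Matrix.l2_opNorm_diagonal]
    exact pi_norm_le_iff_of_nonneg zero_le_one |>.2 fun _ => by simp
  refine (sq_le_one_iff₀ (norm_nonneg A)).1 ?_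
  rwa [sq, ← Matrix.l2_opNorm_conjTranspose_mul_self, hA]

theorem gram_isometry_mul {Q : Matrix m n 𝕜} (hQ : Qᴴ * Q = 1)
    (G : Matrix n ρ 𝕜) : (Q * G)ᴴ * (Q * G) = Gᴴ * G := by
  rw [Matrix.conjTranspose_mul, Matrix.mul_assoc, ← Matrix.mul_assoc Qᴴ, hQ, Matrix.one_mul]

variable [Fintype p] [DecidableEq p]

theorem l2_opNorm_conjTranspose_mul_le {L : Matrix m n 𝕜} (hL : Lᴴ * L = 1) (G : Matrix m p 𝕜) :
    ‖Lᴴ * G‖ ≤ ‖G‖ := by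
  classical
  refine (Matrix.l2_opNorm_mul _ _).trans (mul_le_of_le_one_left (norm_nonneg _) ?_)
  rw [Matrix.l2_opNorm_conjTranspose]
  exact l2_opNorm_le_one_of_conjTranspose_mul_self hL

theorem l2_opNorm_mul_mul_conjTranspose_le [DecidableEq m] {A : Matrix l m 𝕜} {B : Matrix m n 𝕜}
    {C : Matrix p n 𝕜} {δ : ℝ} (hA : ‖A‖ ≤ δ) (hB : ‖B‖ ≤ 1) (hC : ‖C‖ ≤ 1) :
    ‖A * (B * Cᴴ)‖ ≤ δ :=
  calc ‖A * (B * Cᴴ)‖ ≤ ‖A‖ * (‖B‖ * ‖Cᴴ‖) := (Matrix.l2_opNorm_mul _ _).trans <|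
        mul_le_mul_of_nonneg_left (Matrix.l2_opNorm_mul _ _) (norm_nonneg _)
    _ ≤ δ * (1 * 1) := by
      rw [Matrix.l2_opNorm_conjTranspose]
      gcongr
      exact (norm_nonneg _).trans hA
    _ = δ := by rw [one_mul, mul_one]

end OperatorNorm

section OrthogonalConjugation

variable {ι : Type*} [Fintype ι] [DecidableEq ι]

/-- The orthogonal group acting on square matrices by conjugation, the action under which the
uniform measure on the Grassmannian is invariant. The synonym `ConjAct` keeps it apart from left
multiplication. -/
abbrev OrthogonalConj (ι : Type*) [Fintype ι] [DecidableEq ι] : Type _ :=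
  ConjAct (Matrix.orthogonalGroup ι ℝ)

instance : TopologicalSpace (OrthogonalConj ι) :=
  inferInstanceAs (TopologicalSpace (Matrix.orthogonalGroup ι ℝ))

instance : IsTopologicalGroup (OrthogonalConj ι) :=
  inferInstanceAs (IsTopologicalGroup (Matrix.orthogonalGroup ι ℝ))

instance : SecondCountableTopology (OrthogonalConj ι) :=
  inferInstanceAs (SecondCountableTopology (Matrix.orthogonalGroup ι ℝ))

instance : CompactSpace (OrthogonalConj ι) := by
  suffices IsCompact (Matrix.orthogonalGroup ι ℝ : Set (Matrix ι ι ℝ)) from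
    isCompact_iff_compactSpace.1 this
  refine Metric.isCompact_of_isClosed_isBounded isClosed_unitary ?_
  refine (Metric.isBounded_closedBall (x := (0 : Matrix ι ι ℝ)) (r := 1)).subset fun Q hQ => ?_
  exact mem_closedBall_zero_iff.2 (l2_opNorm_le_one_of_conjTranspose_mul_self hQ.1)

instance : MulAction (OrthogonalConj ι) (Matrix ι ι ℝ) where
  smul Q P := (ConjAct.ofConjAct Q).1 * P * (ConjAct.ofConjAct Q).1ᴴ
  one_smul P := show 1 * P * 1ᴴ = P by simp
  mul_smul Q R P := by
    let Q' := (ConjAct.ofConjAct Q).1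
    let R' := (ConjAct.ofConjAct R).1
    change Q' * R' * P * (Q' * R')ᴴ = Q' * (R' * P * R'ᴴ) * Q'ᴴ
    simp only [Matrix.conjTranspose_mul, Matrix.mul_assoc]

theorem orthogonalConj_smul_one_sub (Q : OrthogonalConj ι) (P : Matrix ι ι ℝ) :
    Q • (1 - P) = 1 - Q • P := by
  let Q' : Matrix ι ι ℝ := (ConjAct.ofConjAct Q).1
  have hQ : Q' * Q'ᴴ = 1 := (ConjAct.ofConjAct Q).2.2
  calc Q • (1 - P) = Q' * (1 - P) * Q'ᴴ := rfl
    _ = 1 - Q' * P * Q'ᴴ := by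
      rw [Matrix.mul_sub, Matrix.sub_mul, Matrix.mul_one, hQ]

instance : ContinuousSMul (OrthogonalConj ι) (Matrix ι ι ℝ) where
  continuous_smul := by
    have continuous_coe : Continuous fun Q : OrthogonalConj ι =>
        (ConjAct.ofConjAct Q).1 := continuous_subtype_val
    exact ((continuous_coe.comp continuous_fst).mul continuous_snd).mul
      (continuous_coe.comp continuous_fst).matrix_conjTranspose

theorem measurableSet_orbit (P : Matrix ι ι ℝ) :
    MeasurableSet (MulAction.orbit (OrthogonalConj ι) P) :=
  (isCompact_range (continuous_id.smul continuous_const)).measurableSet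

theorem smulInvariantMeasure_of_map_mul_mul_transpose {μ : Measure (Matrix ι ι ℝ)}
    (h : ∀ Q : Matrix ι ι ℝ, Q * Qᵀ = 1 → Qᵀ * Q = 1 → μ.map (fun P => Q * P * Qᵀ) = μ) :
    SMulInvariantMeasure (OrthogonalConj ι) (Matrix ι ι ℝ) μ where
  measure_preimage_smul g s hs := by
    let Q : Matrix ι ι ℝ := (ConjAct.ofConjAct g).1
    have map_smul : μ.map (g • ·) = μ := h Q (ConjAct.ofConjAct g).2.2 (ConjAct.ofConjAct g).2.1
    rw [← Measure.map_apply (measurable_const_smul g) hs, map_smul]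

end OrthogonalConjugation

section OrthonormalSplitting

variable {κ ρ ν 𝕜 : Type*} [Fintype κ] [DecidableEq κ] [Fintype ρ] [DecidableEq ρ] [Fintype ν]
  [DecidableEq ν] [RCLike 𝕜]

/-- The columns of `J` and of `K` together form an orthonormal basis, so that `J * Jᴴ` and
`K * Kᴴ` are complementary orthogonal projections and `J`, `K` are coordinates on their ranges. -/
structure IsOrthonormalSplitting (J : Matrix κ ρ 𝕜) (K : Matrix κ ν 𝕜) : Prop where
  left_isometry : Jᴴ * J = 1
  right_isometry : Kᴴ * K = 1
  complete : J * Jᴴ + K * Kᴴ = 1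

namespace IsOrthonormalSplitting

variable {J : Matrix κ ρ 𝕜} {K : Matrix κ ν 𝕜}

theorem symm (h : IsOrthonormalSplitting J K) : IsOrthonormalSplitting K J :=
  ⟨h.right_isometry, h.left_isometry, by rw [add_comm, h.complete]⟩

theorem conjTranspose_mul_eq_zero (h : IsOrthonormalSplitting J K) : Jᴴ * K = 0 := by
  have : Jᴴ * K + Jᴴ * K = Jᴴ * K :=
    calc Jᴴ * K + Jᴴ * K = Jᴴ * J * (Jᴴ * K) + Jᴴ * K * (Kᴴ * K) := by
          rw [h.left_isometry, h.right_isometry, Matrix.one_mul, Matrix.mul_one]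
      _ = Jᴴ * (J * Jᴴ + K * Kᴴ) * K := by
          simp only [Matrix.mul_add, Matrix.add_mul, Matrix.mul_assoc]
      _ = Jᴴ * K := by rw [h.complete, Matrix.mul_one]
  simpa using this

theorem left_mul_graph (h : IsOrthonormalSplitting J K) (Z : Matrix ν ρ 𝕜) :
    Jᴴ * (J + K * Z) = 1 := by
  rw [Matrix.mul_add, ← Matrix.mul_assoc, h.left_isometry, h.conjTranspose_mul_eq_zero,
    Matrix.zero_mul, add_zero]

theorem right_mul_graph (h : IsOrthonormalSplitting J K) (Z : Matrix ν ρ 𝕜) :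
    Kᴴ * (J + K * Z) = Z := by
  rw [Matrix.mul_add, ← Matrix.mul_assoc, h.right_isometry, h.symm.conjTranspose_mul_eq_zero,
    Matrix.one_mul, zero_add]

theorem isStarProjection (h : IsOrthonormalSplitting J K) : IsStarProjection (J * Jᴴ) where
  isIdempotentElem := by
    rw [IsIdempotentElem, ← Matrix.mul_assoc, Matrix.mul_assoc J, h.left_isometry, Matrix.mul_one]
  isSelfAdjoint := Matrix.isHermitian_mul_conjTranspose_self J

end IsOrthonormalSplitting

theorem isOrthonormalSplitting_submatrix {U : Matrix κ κ 𝕜} (hU : Uᴴ * U = 1) (σ : ρ ⊕ ν ≃ κ) :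
    IsOrthonormalSplitting (U.submatrix id (σ ∘ .inl)) (U.submatrix id (σ ∘ .inr)) where
  left_isometry := by
    rw [Matrix.conjTranspose_submatrix, ← Matrix.submatrix_mul _ _ _ id _ Function.bijective_id, hU]
    exact Matrix.submatrix_one _ (σ.injective.comp Sum.inl_injective)
  right_isometry := by
    rw [Matrix.conjTranspose_submatrix, ← Matrix.submatrix_mul _ _ _ id _ Function.bijective_id, hU]
    exact Matrix.submatrix_one _ (σ.injective.comp Sum.inr_injective)
  complete := by
    ext i j
    rw [← mul_eq_one_comm.1 hU, Matrix.add_apply, Matrix.mul_apply, Matrix.mul_apply,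
      Matrix.mul_apply, ← σ.sum_comp, Fintype.sum_sum_type]
    rfl

theorem mul_eigenvectorUnitary {A : Matrix κ κ 𝕜} (hA : A.IsHermitian) :
    A * (hA.eigenvectorUnitary : Matrix κ κ 𝕜) =
      (hA.eigenvectorUnitary : Matrix κ κ 𝕜) *
        Matrix.diagonal (RCLike.ofReal ∘ hA.eigenvalues) := by
  nth_rw 1 [hA.spectral_theorem]
  rw [Unitary.conjStarAlgAut_apply, Matrix.mul_assoc, Unitary.coe_star_mul_self, Matrix.mul_one]

theorem exists_isOrthonormalSplitting_of_isStarProjection {P : Matrix κ κ 𝕜}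
    (hP : IsStarProjection P) (hρ : P.rank = Fintype.card ρ)
    (hκ : Fintype.card κ = Fintype.card ρ + Fintype.card ν) :
    ∃ (J : Matrix κ ρ 𝕜) (K : Matrix κ ν 𝕜), IsOrthonormalSplitting J K ∧ J * Jᴴ = P := by
  have hH : P.IsHermitian := hP.isSelfAdjoint
  have eigenvalue_eq_one {i : κ} (hi : hH.eigenvalues i ≠ 0) : hH.eigenvalues i = 1 :=
    (hP.isIdempotentElem.spectrum_subset ℝ (hH.eigenvalues_mem_spectrum_real i)).resolve_left hi
  rw [hH.rank_eq_card_non_zero_eigs] at hρ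
  let e₁ : ρ ≃ {i // hH.eigenvalues i ≠ 0} := Fintype.equivOfCardEq hρ.symm
  let e₀ : ν ≃ {i // ¬ hH.eigenvalues i ≠ 0} := Fintype.equivOfCardEq <| by
    rw [Fintype.card_subtype_compl]
    omega
  let σ : ρ ⊕ ν ≃ κ := (e₁.sumCongr e₀).trans (Equiv.sumCompl _)
  let U : Matrix κ κ 𝕜 := hH.eigenvectorUnitary
  let J : Matrix κ ρ 𝕜 := U.submatrix id (σ ∘ .inl)
  let K : Matrix κ ν 𝕜 := U.submatrix id (σ ∘ .inr)
  have hJK : IsOrthonormalSplitting J K :=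
    isOrthonormalSplitting_submatrix hH.eigenvectorUnitary.2.1 σ
  have eigen_column (i j : κ) : (P * U) i j = U i j * hH.eigenvalues j := by
    rw [mul_eigenvectorUnitary hH, Matrix.mul_diagonal, Function.comp_apply]
  have hPJ : P * J = J := by
    ext i k
    change (P * U) i (e₁ k) = U i (e₁ k)
    rw [eigen_column, eigenvalue_eq_one (e₁ k).2, RCLike.ofReal_one, mul_one]
  have hPK : P * K = 0 := by
    ext i k
    change (P * U) i (e₀ k) = 0
    rw [eigen_column, not_not.1 (e₀ k).2, RCLike.ofReal_zero, mul_zero]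
  refine ⟨J, K, hJK, ?_⟩
  calc J * Jᴴ = P * (J * Jᴴ + K * Kᴴ) := by
        rw [Matrix.mul_add, ← Matrix.mul_assoc, ← Matrix.mul_assoc, hPJ, hPK, Matrix.zero_mul,
          add_zero]
    _ = P := by rw [hJK.complete, Matrix.mul_one]

end OrthonormalSplitting

section ColProj

variable {κ ρ ν l 𝕜 : Type*} [Fintype κ] [Fintype ρ] [DecidableEq ρ] [Fintype ν] [DecidableEq ν]
  [Fintype l] [RCLike 𝕜]

/-- The orthogonal projection onto the column space of `G`, meaningful when the columns are
linearly independent, that is, when the Gram matrix `Gᴴ * G` is invertible. -/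
def colProj (G : Matrix κ ρ 𝕜) : Matrix κ κ 𝕜 :=
  G * (Gᴴ * G)⁻¹ * Gᴴ

theorem colProj_mul_self {G : Matrix κ ρ 𝕜} (hG : IsUnit (Gᴴ * G)) : colProj G * G = G := by
  rw [colProj, Matrix.mul_assoc, Matrix.mul_assoc,
    Matrix.nonsing_inv_mul _ ((Matrix.isUnit_iff_isUnit_det _).1 hG), Matrix.mul_one]

theorem isStarProjection_colProj {G : Matrix κ ρ 𝕜} (hG : IsUnit (Gᴴ * G)) :
    IsStarProjection (colProj G) where
  isIdempotentElem := by
    rw [IsIdempotentElem]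
    nth_rw 2 [colProj]
    rw [← Matrix.mul_assoc, ← Matrix.mul_assoc, colProj_mul_self hG, colProj]
  isSelfAdjoint := Matrix.isHermitian_mul_mul_conjTranspose G
    (Matrix.isHermitian_conjTranspose_mul_self G).inv

open scoped ComplexOrder in
theorem rank_colProj {G : Matrix κ ρ 𝕜} (hG : IsUnit (Gᴴ * G)) :
    (colProj G).rank = Fintype.card ρ := by
  rw [← Matrix.rank_of_isUnit _ hG, Matrix.rank_conjTranspose_mul_self]
  refine le_antisymm ?_ ?_
  · rw [colProj, Matrix.mul_assoc]
    exact Matrix.rank_mul_le_left G _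
  · conv_lhs => rw [← colProj_mul_self hG]
    exact Matrix.rank_mul_le_left _ G

theorem colProj_isometry_mul [DecidableEq κ] {Q : Matrix l κ 𝕜} (hQ : Qᴴ * Q = 1)
    (G : Matrix κ ρ 𝕜) : colProj (Q * G) = Q * colProj G * Qᴴ := by
  rw [colProj, gram_isometry_mul hQ, colProj]
  simp only [Matrix.conjTranspose_mul, Matrix.mul_assoc]

theorem colProj_mul_of_isUnit (G : Matrix κ ρ 𝕜) {X : Matrix ρ ρ 𝕜} (hX : IsUnit X) :
    colProj (G * X) = colProj G := by
  have hX' := (Matrix.isUnit_iff_isUnit_det X).1 hX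
  have hXH : IsUnit Xᴴ.det := by rw [Matrix.det_conjTranspose]; exact hX'.star
  calc colProj (G * X) = G * (X * (Xᴴ * (Gᴴ * G * X))⁻¹ * Xᴴ) * Gᴴ := by
        simp only [colProj, Matrix.conjTranspose_mul, Matrix.mul_assoc]
    _ = colProj G := by
        rw [Matrix.mul_inv_rev, Matrix.mul_inv_rev, Matrix.mul_assoc X⁻¹, ← Matrix.mul_assoc X,
          Matrix.mul_nonsing_inv _ hX', Matrix.one_mul, Matrix.mul_assoc (Gᴴ * G)⁻¹,
          Matrix.nonsing_inv_mul _ hXH, Matrix.mul_one, colProj]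

open scoped ComplexOrder in
theorem isUnit_gram_graph [DecidableEq κ] {J : Matrix κ ρ 𝕜} {K : Matrix κ ν 𝕜}
    (h : IsOrthonormalSplitting J K) (Z : Matrix ν ρ 𝕜) :
    IsUnit ((J + K * Z)ᴴ * (J + K * Z)) := by
  have gram_eq : (J + K * Z)ᴴ * (J + K * Z) = 1 + Zᴴ * Z := by
    rw [Matrix.conjTranspose_add, Matrix.add_mul, h.left_mul_graph, Matrix.conjTranspose_mul,
      Matrix.mul_assoc, h.right_mul_graph]
  rw [gram_eq]
  exact (Matrix.PosDef.one.add_posSemidef (Matrix.posSemidef_conjTranspose_mul_self Z)).isUnit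

/- Split the difference along `1 = J * Jᴴ + K * Kᴴ`, and use `Jᴴ (1 - P) = -Zᴴ Kᴴ (1 - P)` and
`Kᴴ P = Z Jᴴ P` for the projection `P` onto the graph of `Z`. -/
theorem l2_opNorm_mul_sub_colProj_graph_le [DecidableEq κ] {J : Matrix κ ρ 𝕜} {K : Matrix κ ν 𝕜}
    (h : IsOrthonormalSplitting J K) {M : Matrix l κ 𝕜} {Z : Matrix ν ρ 𝕜} {δ : ℝ}
    (hJ : ‖M * J * Zᴴ‖ ≤ δ) (hK : ‖M * K * Z‖ ≤ δ) :
    ‖M * (J * Jᴴ - colProj (J + K * Z))‖ ≤ 2 * δ := by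
  have hF := isUnit_gram_graph h Z
  set P := colProj (J + K * Z) with P_def
  have hP : IsStarProjection P := isStarProjection_colProj hF
  have off_graph : Jᴴ * (1 - P) = -(Zᴴ * (Kᴴ * (1 - P))) := by
    have : (J + K * Z)ᴴ * P = (J + K * Z)ᴴ := by
      have := congrArg Matrix.conjTranspose (colProj_mul_self hF)
      rwa [Matrix.conjTranspose_mul, ← Matrix.star_eq_conjTranspose (colProj _),
        hP.isSelfAdjoint.star_eq] at this
    rw [eq_neg_iff_add_eq_zero, ← Matrix.mul_assoc, ← Matrix.conjTranspose_mul, ← Matrix.add_mul,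
      ← Matrix.conjTranspose_add, Matrix.mul_sub, Matrix.mul_one, this, sub_self]
  have on_graph : Kᴴ * P = Z * (Jᴴ * P) := by
    rw [P_def, colProj, Matrix.mul_assoc, ← Matrix.mul_assoc Kᴴ, ← Matrix.mul_assoc Jᴴ,
      h.left_mul_graph, h.right_mul_graph, Matrix.one_mul]
  have decomposition : M * (J * Jᴴ - P) =
      -(M * J * Zᴴ * (Kᴴ * (1 - P)) + M * K * Z * (Jᴴ * P)) :=
    calc M * (J * Jᴴ - P) = M * (J * Jᴴ - (J * Jᴴ + K * Kᴴ) * P) := by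
          rw [h.complete, Matrix.one_mul]
      _ = M * (J * (Jᴴ * (1 - P)) - K * (Kᴴ * P)) := by
          congr 1
          simp only [Matrix.add_mul, Matrix.mul_sub, Matrix.mul_one, Matrix.mul_assoc]
          abel
      _ = _ := by
          rw [off_graph, on_graph]
          simp only [Matrix.mul_sub, Matrix.mul_neg, Matrix.mul_assoc]
          abel
  calc ‖M * (J * Jᴴ - P)‖
      ≤ ‖M * J * Zᴴ‖ * (‖Kᴴ‖ * ‖1 - P‖) + ‖M * K * Z‖ * (‖Jᴴ‖ * ‖P‖) := by
        rw [decomposition, norm_neg]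
        refine (norm_add_le _ _).trans (add_le_add ?_ ?_) <;>
          refine (Matrix.l2_opNorm_mul _ _).trans ?_ <;> gcongr <;> exact Matrix.l2_opNorm_mul _ _
    _ ≤ δ * (1 * 1) + δ * (1 * 1) := by
        rw [Matrix.l2_opNorm_conjTranspose, Matrix.l2_opNorm_conjTranspose]
        gcongr
        · exact (norm_nonneg _).trans hJ
        · exact l2_opNorm_le_one_of_conjTranspose_mul_self h.right_isometry
        · exact hP.one_sub.norm_le
        · exact (norm_nonneg _).trans hK
        · exact l2_opNorm_le_one_of_conjTranspose_mul_self h.left_isometry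
        · exact hP.norm_le
    _ = 2 * δ := by ring

end ColProj

section OrbitOfProjections

variable {κ : Type*} [Fintype κ] [DecidableEq κ]

theorem mem_orbit_of_isStarProjection_of_rank_eq {P P' : Matrix κ κ ℝ} (hP : IsStarProjection P)
    (hP' : IsStarProjection P') (hrank : P'.rank = P.rank) :
    P' ∈ MulAction.orbit (OrthogonalConj κ) P := by
  have card_eq : Fintype.card κ =
      Fintype.card (Fin P.rank) + Fintype.card (Fin (Fintype.card κ - P.rank)) := by
    have := P.rank_le_card_height
    simp only [Fintype.card_fin]
    omega
  obtain ⟨J, K, h, hJ⟩ :=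
    exists_isOrthonormalSplitting_of_isStarProjection hP (Fintype.card_fin _).symm card_eq
  obtain ⟨J', K', h', hJ'⟩ := exists_isOrthonormalSplitting_of_isStarProjection hP'
    (hrank.trans (Fintype.card_fin _).symm) card_eq
  let Q : Matrix κ κ ℝ := J' * Jᴴ + K' * Kᴴ
  have hQJ : Q * J = J' := by
    simp only [Q, Matrix.add_mul, Matrix.mul_assoc, h.left_isometry,
      h.symm.conjTranspose_mul_eq_zero, Matrix.mul_one, Matrix.mul_zero, add_zero]
  have hQK : Q * K = K' := by
    simp only [Q, Matrix.add_mul, Matrix.mul_assoc, h.right_isometry,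
      h.conjTranspose_mul_eq_zero, Matrix.mul_one, Matrix.mul_zero, zero_add]
  have hQ : Q * Qᴴ = 1 := by
    calc Q * Qᴴ = Q * (J * Jᴴ + K * Kᴴ) * Qᴴ := by rw [h.complete, Matrix.mul_one]
      _ = Q * J * (Q * J)ᴴ + Q * K * (Q * K)ᴴ := by
        simp only [Matrix.mul_add, Matrix.add_mul, Matrix.conjTranspose_mul, Matrix.mul_assoc]
      _ = 1 := by rw [hQJ, hQK, h'.complete]
  refine ⟨ConjAct.toConjAct ⟨Q, Matrix.mem_unitaryGroup_iff.2 hQ⟩, ?_⟩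
  change Q * P * Qᴴ = P'
  rw [← hJ, ← hJ', ← hQJ, Matrix.conjTranspose_mul]
  simp only [Matrix.mul_assoc]

end OrbitOfProjections

section Volume

variable {m n : Type*} [Fintype m] [Fintype n] [DecidableEq n]

theorem measurable_colProj : Measurable (colProj : Matrix m n ℝ → Matrix m m ℝ) := by
  have colProj_eq : (colProj : Matrix m n ℝ → Matrix m m ℝ) =
      fun G => (Gᴴ * G).det⁻¹ • (G * (Gᴴ * G).adjugate * Gᴴ) := by
    ext1 G
    rw [colProj, Matrix.inv_def, Ring.inverse_eq_inv', Matrix.mul_smul, Matrix.smul_mul]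
  have continuous_gram : Continuous fun G : Matrix m n ℝ => Gᴴ * G := by fun_prop
  rw [colProj_eq]
  exact continuous_gram.matrix_det.measurable.inv.smul
    ((Continuous.matrix_mul continuous_id continuous_gram.matrix_adjugate).matrix_mul
      continuous_id.matrix_conjTranspose).measurable

/-- The Haar measure giving mass `1` to the closed unit ball. -/
def unitBallMeasure (E : Type*) [NormedAddCommGroup E] [ProperSpace E] [MeasurableSpace E]
    [BorelSpace E] : Measure E :=
  Measure.addHaarMeasure
    ⟨⟨Metric.closedBall 0 1, isCompact_closedBall 0 1⟩,
      ⟨0, Metric.ball_subset_interior_closedBall (Metric.mem_ball_self one_pos)⟩⟩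

theorem unitBallMeasure_closedBall {E : Type*} [NormedAddCommGroup E] [NormedSpace ℝ E]
    [FiniteDimensional ℝ E] [ProperSpace E] [MeasurableSpace E] [BorelSpace E] (x : E) {r : ℝ}
    (hr : 0 ≤ r) :
    unitBallMeasure E (Metric.closedBall x r) = ENNReal.ofReal (r ^ Module.finrank ℝ E) := by
  rw [unitBallMeasure, Measure.addHaar_closedBall' _ x hr]
  exact (congrArg _ Measure.addHaarMeasure_self).trans (mul_one _)

instance (E : Type*) [NormedAddCommGroup E] [ProperSpace E] [MeasurableSpace E] [BorelSpace E] :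
    (unitBallMeasure E).IsAddHaarMeasure :=
  inferInstanceAs (Measure.addHaarMeasure _).IsAddHaarMeasure

theorem abs_det_of_conjTranspose_mul_self {Q : Matrix n n ℝ} (hQ : Qᴴ * Q = 1) : |Q.det| = 1 := by
  have := congrArg Matrix.det hQ
  rw [Matrix.det_mul, Matrix.det_conjTranspose, star_trivial, Matrix.det_one] at this
  exact (abs_eq zero_le_one).2 (mul_self_eq_one_iff.1 this)

theorem det_mulLeft_comp_mulRight [DecidableEq m] {R : Type*} [CommRing R] (A : Matrix m m R)
    (B : Matrix n n R) :
    LinearMap.det (mulLeftLinearMap n R A ∘ₗ mulRightLinearMap m R B) =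
      A.det ^ Fintype.card n * B.det ^ Fintype.card m := by
  let vecEquiv : Matrix m n R ≃ₗ[R] (n × m → R) :=
    LinearEquiv.ofBijective
      { toFun := Matrix.vec, map_add' := Matrix.vec_add, map_smul' := Matrix.vec_smul }
      Matrix.vec_bijective
  have conj_eq : vecEquiv ∘ₗ (mulLeftLinearMap n R A ∘ₗ mulRightLinearMap m R B) ∘ₗ
      vecEquiv.symm = Matrix.toLin' (Bᵀ.kronecker A) := by
    refine LinearMap.ext fun v => ?_
    obtain ⟨Y, rfl⟩ := vecEquiv.surjective v
    change vecEquiv (A * (vecEquiv.symm (vecEquiv Y) * B)) = (Bᵀ.kronecker A) *ᵥ Y.vec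
    rw [vecEquiv.symm_apply_apply, ← Matrix.mul_assoc]
    exact (Matrix.kronecker_mulVec_vec A Y Bᵀ).symm
  rw [← LinearMap.det_conj _ vecEquiv, conj_eq, LinearMap.det_toLin', Matrix.kronecker,
    Matrix.det_kronecker, Matrix.det_transpose, mul_comm]

theorem one_le_abs_det_of_norm_le {E : Type*} [NormedAddCommGroup E] [NormedSpace ℝ E]
    [FiniteDimensional ℝ E] {f : E →ₗ[ℝ] E} (hf : ∀ x, ‖x‖ ≤ ‖f x‖) : 1 ≤ |LinearMap.det f| := by
  borelize E
  have : ProperSpace E := FiniteDimensional.proper_real E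
  have f_surjective : Function.Surjective f := LinearMap.surjective_of_injective <|
    (injective_iff_map_eq_zero f).2 fun x hx => norm_le_zero_iff.1 (by simpa [hx] using hf x)
  have ball_subset : Metric.closedBall 0 1 ⊆ f '' Metric.closedBall 0 1 := fun y hy => by
    obtain ⟨x, rfl⟩ := f_surjective y
    exact ⟨x, mem_closedBall_zero_iff.2 ((hf x).trans (mem_closedBall_zero_iff.1 hy)), rfl⟩
  have := measure_mono (μ := unitBallMeasure E) ball_subset
  rwa [Measure.addHaar_image_linearMap, unitBallMeasure_closedBall _ zero_le_one, one_pow,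
    ENNReal.ofReal_one, mul_one, ENNReal.one_le_ofReal] at this

theorem mul_measure_le_prod {α β : Type*} [MeasurableSpace α] [MeasurableSpace β]
    {μ : Measure α} {ν : Measure β} [SFinite ν] {s : Set (α × β)} (hs : MeasurableSet s)
    {B : Set α} {a : ℝ≥0∞} (h : ∀ x ∈ B, a ≤ ν (Prod.mk x ⁻¹' s)) : a * μ B ≤ (μ.prod ν) s := by
  rw [Measure.prod_apply hs]
  exact (mul_le_mul_right (measure_mono h) a).trans
    (mul_meas_ge_le_lintegral (measurable_measure_prodMk_left hs) a)

section NearTwo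

variable {X : Matrix n n ℝ}

theorem norm_le_three_of_norm_sub_two_le (hX : ‖X - (2 : ℝ) • 1‖ ≤ 1) : ‖X‖ ≤ 3 :=
  calc ‖X‖ = ‖(X - (2 : ℝ) • 1) + (2 : ℝ) • 1‖ := by rw [sub_add_cancel]
    _ ≤ ‖X - (2 : ℝ) • 1‖ + 2 * ‖(1 : Matrix n n ℝ)‖ := by
      simpa [norm_smul] using norm_add_le (X - (2 : ℝ) • 1) ((2 : ℝ) • 1)
    _ ≤ 3 := by
      linarith [l2_opNorm_le_one_of_conjTranspose_mul_self
        (show (1 : Matrix n n ℝ)ᴴ * 1 = 1 by simp)]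

theorem isUnit_of_norm_sub_two_le (hX : ‖X - (2 : ℝ) • 1‖ ≤ 1) : IsUnit X := by
  have norm_lt : ‖1 - (2⁻¹ : ℝ) • X‖ < 1 := by
    have : 1 - (2⁻¹ : ℝ) • X = -((2⁻¹ : ℝ) • (X - (2 : ℝ) • 1)) := by
      rw [smul_sub, smul_smul]; norm_num
    rw [this, norm_neg, norm_smul]
    norm_num
    linarith
  have := isUnit_one_sub_of_norm_lt_one norm_lt
  rw [sub_sub_cancel] at this
  exact (isUnit_smul_iff (Units.mk0 (2⁻¹ : ℝ) (by norm_num)) X).1 this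

theorem one_le_abs_det_pow_of_norm_sub_two_le (hX : ‖X - (2 : ℝ) • 1‖ ≤ 1) :
    1 ≤ |X.det| ^ Fintype.card m := by
  classical
  have norm_le (W : Matrix m n ℝ) : ‖W‖ ≤ ‖W * X‖ := by
    have hW : W * X = W * (X - (2 : ℝ) • 1) + (2 : ℝ) • W := by
      rw [Matrix.mul_sub, Matrix.mul_smul, Matrix.mul_one, sub_add_cancel]
    have h₁ := norm_sub_norm_le ((2 : ℝ) • W) (-(W * (X - (2 : ℝ) • 1)))
    have h₂ := (Matrix.l2_opNorm_mul W (X - (2 : ℝ) • 1)).trans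
      (mul_le_of_le_one_right (norm_nonneg W) hX)
    rw [sub_neg_eq_add, add_comm, ← hW, norm_neg, norm_smul, Real.norm_ofNat] at h₁
    linarith
  have := one_le_abs_det_of_norm_le
    (f := mulLeftLinearMap n ℝ (1 : Matrix m m ℝ) ∘ₗ mulRightLinearMap m ℝ X)
    fun W => by simpa using norm_le W
  rwa [det_mulLeft_comp_mulRight, Matrix.det_one, one_pow, one_mul, abs_pow] at this

end NearTwo

end Volume

section FrameMeasure

variable {κ ρ ν l : Type*} [Fintype κ] [Fintype ρ] [DecidableEq ρ] [Fintype ν]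
  [DecidableEq ν] [Fintype l]

/-- The frames of norm at most `6` with linearly independent columns. The radius is large enough
to contain `(J + K * Z) * X` whenever `‖Z‖ ≤ 1` and `‖X‖ ≤ 3`. -/
def boundedFrames (κ ρ : Type*) [Fintype κ] [Fintype ρ] [DecidableEq ρ] :
    Set (Matrix κ ρ ℝ) :=
  {G | ‖G‖ ≤ 6 ∧ IsUnit (Gᴴ * G)}

theorem measurableSet_boundedFrames : MeasurableSet (boundedFrames κ ρ) := by
  have isUnit_iff (G : Matrix κ ρ ℝ) : IsUnit (Gᴴ * G) ↔ (Gᴴ * G).det ≠ 0 := by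
    rw [Matrix.isUnit_iff_isUnit_det, isUnit_iff_ne_zero]
  simp only [boundedFrames, isUnit_iff]
  exact (isClosed_le continuous_norm continuous_const).measurableSet.inter
    (isOpen_ne_fun (by fun_prop) continuous_const).measurableSet

variable [DecidableEq κ] {J : Matrix κ ρ ℝ} {K : Matrix κ ν ℝ}

/-- Coordinates `G = J * X + K * Y` of a frame `G` adapted to an orthonormal splitting. -/
def IsOrthonormalSplitting.frameEquiv (h : IsOrthonormalSplitting J K) :
    (Matrix ρ ρ ℝ × Matrix ν ρ ℝ) ≃L[ℝ] Matrix κ ρ ℝ :=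
  LinearEquiv.toContinuousLinearEquiv
    { toFun := fun p => J * p.1 + K * p.2
      map_add' := fun p q => by simp only [Prod.fst_add, Prod.snd_add, Matrix.mul_add]; abel
      map_smul' := fun c p => by simp
      invFun := fun G => (Jᴴ * G, Kᴴ * G)
      left_inv := fun p => by
        simp only [Matrix.mul_add, ← Matrix.mul_assoc, h.left_isometry, h.right_isometry,
          h.conjTranspose_mul_eq_zero, h.symm.conjTranspose_mul_eq_zero, Matrix.one_mul,
          Matrix.zero_mul, add_zero, zero_add]
      right_inv := fun G => by
        simp only [← Matrix.mul_assoc, ← Matrix.add_mul, h.complete, Matrix.one_mul] }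

theorem IsOrthonormalSplitting.frameEquiv_apply (h : IsOrthonormalSplitting J K)
    (X : Matrix ρ ρ ℝ) (Y : Matrix ν ρ ℝ) : h.frameEquiv (X, Y) = J * X + K * Y :=
  rfl

theorem measurePreserving_mul_of_conjTranspose_mul_self {τ : Type*} [Finite τ] {Q : Matrix κ κ ℝ}
    (hQ : Qᴴ * Q = 1) (m : Measure (Matrix κ τ ℝ)) [m.IsAddHaarMeasure] :
    MeasurePreserving (Q * ·) m m := by
  classical
  have := Fintype.ofFinite τ
  let f := mulLeftLinearMap τ ℝ Q ∘ₗ mulRightLinearMap κ ℝ (1 : Matrix τ τ ℝ)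
  have f_coe : ⇑f = (Q * ·) := funext fun G => by simp [f]
  have abs_det_f : |LinearMap.det f| = 1 := by
    rw [det_mulLeft_comp_mulRight, Matrix.det_one, one_pow, mul_one, abs_pow,
      abs_det_of_conjTranspose_mul_self hQ, one_pow]
  rw [← f_coe]
  refine ⟨f.continuous_of_finiteDimensional.measurable, ?_⟩
  rw [Measure.map_linearMap_addHaar_eq_smul_addHaar m (by simp [← abs_pos, abs_det_f]), abs_inv,
    abs_det_f, inv_one, ENNReal.ofReal_one, one_smul]

theorem mul_mem_boundedFrames_iff {Q : Matrix κ κ ℝ} (hQ : Qᴴ * Q = 1) {G : Matrix κ ρ ℝ} :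
    Q * G ∈ boundedFrames κ ρ ↔ G ∈ boundedFrames κ ρ := by
  have gram_eq := gram_isometry_mul hQ G
  have norm_eq : ‖Q * G‖ = ‖G‖ := by
    rw [← sq_eq_sq₀ (norm_nonneg _) (norm_nonneg _), sq, sq,
      ← Matrix.l2_opNorm_conjTranspose_mul_self, ← Matrix.l2_opNorm_conjTranspose_mul_self, gram_eq]
  simp only [boundedFrames, Set.mem_ofPred_eq, gram_eq, norm_eq]

/-- Haar measure on the frames, normalized in the coordinates of an orthonormal splitting and
restricted to the bounded ones. -/
def IsOrthonormalSplitting.frameMeasure (h : IsOrthonormalSplitting J K) :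
    Measure (Matrix κ ρ ℝ) :=
  (((unitBallMeasure (Matrix ρ ρ ℝ)).prod (unitBallMeasure (Matrix ν ρ ℝ))).map
    h.frameEquiv).restrict (boundedFrames κ ρ)

namespace IsOrthonormalSplitting

variable (h : IsOrthonormalSplitting J K)

theorem frameMeasure_apply {s : Set (Matrix κ ρ ℝ)} (hs : MeasurableSet s) :
    h.frameMeasure s = ((unitBallMeasure (Matrix ρ ρ ℝ)).prod (unitBallMeasure (Matrix ν ρ ℝ)))
      (h.frameEquiv ⁻¹' (s ∩ boundedFrames κ ρ)) := by
  rw [frameMeasure, Measure.restrict_apply hs,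
    Measure.map_apply h.frameEquiv.continuous.measurable (hs.inter measurableSet_boundedFrames)]

theorem frameMeasure_univ_le :
    h.frameMeasure Set.univ ≤
      ENNReal.ofReal (6 ^ (Fintype.card ρ * (Fintype.card ρ + Fintype.card ν))) := by
  have preimage_subset : h.frameEquiv ⁻¹' (Set.univ ∩ boundedFrames κ ρ) ⊆
      Metric.closedBall 0 6 ×ˢ Metric.closedBall 0 6 := by
    rintro p ⟨-, hp, -⟩
    obtain ⟨G, rfl⟩ := h.frameEquiv.symm.surjective p
    rw [h.frameEquiv.apply_symm_apply] at hp
    exact ⟨mem_closedBall_zero_iff.2 ((l2_opNorm_conjTranspose_mul_le h.left_isometry G).trans hp),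
      mem_closedBall_zero_iff.2 ((l2_opNorm_conjTranspose_mul_le h.right_isometry G).trans hp)⟩
  rw [h.frameMeasure_apply MeasurableSet.univ]
  refine (measure_mono preimage_subset).trans_eq ?_
  have six_nonneg : (0 : ℝ) ≤ 6 := by norm_num
  rw [Measure.prod_prod, unitBallMeasure_closedBall _ six_nonneg,
    unitBallMeasure_closedBall _ six_nonneg, ← ENNReal.ofReal_mul (by positivity), ← pow_add,
    Module.finrank_matrix, Module.finrank_matrix, Module.finrank_self]
  congr 2
  ring

instance : IsFiniteMeasure h.frameMeasure :=
  ⟨h.frameMeasure_univ_le.trans_lt ENNReal.ofReal_lt_top⟩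

theorem measurePreserving_mul_frameMeasure {Q : Matrix κ κ ℝ} (hQ : Qᴴ * Q = 1) :
    MeasurePreserving (Q * ·) h.frameMeasure h.frameMeasure := by
  have preimage_eq : (fun G : Matrix κ ρ ℝ => Q * G) ⁻¹' boundedFrames κ ρ = boundedFrames κ ρ :=
    Set.ext fun G => by rw [Set.mem_preimage, mul_mem_boundedFrames_iff hQ]
  have := h.frameEquiv.isAddHaarMeasure_map
    ((unitBallMeasure (Matrix ρ ρ ℝ)).prod (unitBallMeasure (Matrix ν ρ ℝ)))
  have := (measurePreserving_mul_of_conjTranspose_mul_self (κ := κ) (τ := ρ) hQ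
    (((unitBallMeasure _).prod (unitBallMeasure _)).map h.frameEquiv)).restrict_preimage
      measurableSet_boundedFrames
  rwa [preimage_eq] at this

theorem graph_mul_mem_boundedFrames (h : IsOrthonormalSplitting J K) {Z : Matrix ν ρ ℝ}
    (hZ : ‖Z‖ ≤ 1) {X : Matrix ρ ρ ℝ} (hX : ‖X - (2 : ℝ) • 1‖ ≤ 1) :
    (J + K * Z) * X ∈ boundedFrames κ ρ := by
  have norm_J := l2_opNorm_le_one_of_conjTranspose_mul_self h.left_isometry
  have norm_K := l2_opNorm_le_one_of_conjTranspose_mul_self h.right_isometry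
  have X_isUnit := isUnit_of_norm_sub_two_le hX
  constructor
  · calc ‖(J + K * Z) * X‖ ≤ (‖J‖ + ‖K‖ * ‖Z‖) * ‖X‖ :=
          (Matrix.l2_opNorm_mul _ _).trans <| mul_le_mul_of_nonneg_right
            ((norm_add_le _ _).trans (add_le_add_right (Matrix.l2_opNorm_mul _ _) _))
            (norm_nonneg _)
      _ ≤ (1 + 1 * 1) * 3 := by gcongr; exact norm_le_three_of_norm_sub_two_le hX
      _ = 6 := by norm_num
  · have gram_eq : ((J + K * Z) * X)ᴴ * ((J + K * Z) * X) =
        Xᴴ * ((J + K * Z)ᴴ * (J + K * Z)) * X := by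
      simp only [Matrix.conjTranspose_mul, Matrix.mul_assoc]
    rw [gram_eq]
    exact (X_isUnit.star.mul (isUnit_gram_graph h Z)).mul X_isUnit

theorem ofReal_abs_det_le_frameMeasure_slice {S : Matrix ν ν ℝ} {T : Matrix ρ ρ ℝ} (hS : ‖S‖ ≤ 1)
    (hT : ‖T‖ ≤ 1) {X : Matrix ρ ρ ℝ} (hX : ‖X - (2 : ℝ) • 1‖ ≤ 1) {s : Set (Matrix κ κ ℝ)}
    (hs : ∀ W : Matrix ν ρ ℝ, ‖W‖ ≤ 1 → colProj (J + K * (S * (W * Tᴴ))) ∈ s) :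
    ENNReal.ofReal (|S.det| ^ Fintype.card ρ * |T.det| ^ Fintype.card ν) ≤
      unitBallMeasure (Matrix ν ρ ℝ)
        (Prod.mk X ⁻¹' (h.frameEquiv ⁻¹' (colProj ⁻¹' s ∩ boundedFrames κ ρ))) := by
  let f := mulLeftLinearMap ρ ℝ S ∘ₗ mulRightLinearMap ν ℝ (Tᴴ * X)
  have frame_eq (W : Matrix ν ρ ℝ) : h.frameEquiv (X, f W) = (J + K * (S * (W * Tᴴ))) * X := by
    rw [frameEquiv_apply]
    simp [f, Matrix.add_mul, Matrix.mul_assoc]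
  have le_abs_det : |S.det| ^ Fintype.card ρ * |T.det| ^ Fintype.card ν ≤ |LinearMap.det f| := by
    rw [det_mulLeft_comp_mulRight, Matrix.det_mul, Matrix.det_conjTranspose, star_trivial,
      abs_mul, abs_pow, abs_pow, abs_mul, mul_pow, ← mul_assoc]
    exact le_mul_of_one_le_right (by positivity) (one_le_abs_det_pow_of_norm_sub_two_le hX)
  calc ENNReal.ofReal (|S.det| ^ Fintype.card ρ * |T.det| ^ Fintype.card ν)
      ≤ unitBallMeasure (Matrix ν ρ ℝ) (f '' Metric.closedBall 0 1) := by
        rw [Measure.addHaar_image_linearMap, unitBallMeasure_closedBall _ zero_le_one, one_pow,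
          ENNReal.ofReal_one, mul_one]
        exact ENNReal.ofReal_le_ofReal le_abs_det
    _ ≤ _ := by
        refine measure_mono ?_
        rintro _ ⟨W, hW, rfl⟩
        rw [mem_closedBall_zero_iff] at hW
        rw [Set.mem_preimage, Set.mem_preimage, frame_eq]
        refine ⟨?_, h.graph_mul_mem_boundedFrames (l2_opNorm_mul_mul_conjTranspose_le hS hW hT) hX⟩
        rw [Set.mem_preimage, colProj_mul_of_isUnit _ (isUnit_of_norm_sub_two_le hX)]
        exact hs W hW

theorem ofReal_abs_det_le_map_frameMeasure {M : Matrix l κ ℝ} {S : Matrix ν ν ℝ}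
    {T : Matrix ρ ρ ℝ} {δ : ℝ} (hS : ‖S‖ ≤ 1) (hT : ‖T‖ ≤ 1) (hMS : ‖M * K * S‖ ≤ δ)
    (hMT : ‖M * J * T‖ ≤ δ) :
    ENNReal.ofReal (|S.det| ^ Fintype.card ρ * |T.det| ^ Fintype.card ν) ≤
      h.frameMeasure.map colProj {P | ‖M * (J * Jᴴ - P)‖ ≤ 2 * δ} := by
  let s : Set (Matrix κ κ ℝ) := {P | ‖M * (J * Jᴴ - P)‖ ≤ 2 * δ}
  have measurableSet_s : MeasurableSet s :=
    (isClosed_le (by fun_prop) continuous_const).measurableSet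
  have measurableSet_frames : MeasurableSet ((colProj : Matrix κ ρ ℝ → _) ⁻¹' s) :=
    measurable_colProj measurableSet_s
  have mem_s (W : Matrix ν ρ ℝ) (hW : ‖W‖ ≤ 1) : colProj (J + K * (S * (W * Tᴴ))) ∈ s := by
    refine l2_opNorm_mul_sub_colProj_graph_le h ?_ ?_
    · have transpose_eq : M * J * (S * (W * Tᴴ))ᴴ = M * J * T * (Wᴴ * Sᴴ) := by
        simp only [Matrix.conjTranspose_mul, Matrix.conjTranspose_conjTranspose, Matrix.mul_assoc]
      rw [transpose_eq]
      exact l2_opNorm_mul_mul_conjTranspose_le hMT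
        ((Matrix.l2_opNorm_conjTranspose W).trans_le hW) hS
    · rw [← Matrix.mul_assoc]
      exact l2_opNorm_mul_mul_conjTranspose_le hMS hW hT
  have unit_mass : unitBallMeasure (Matrix ρ ρ ℝ) (Metric.closedBall ((2 : ℝ) • 1) 1) = 1 := by
    rw [unitBallMeasure_closedBall _ zero_le_one, one_pow, ENNReal.ofReal_one]
  rw [Measure.map_apply measurable_colProj measurableSet_s,
    h.frameMeasure_apply measurableSet_frames, ← mul_one (ENNReal.ofReal _), ← unit_mass]
  exact mul_measure_le_prod
    (h.frameEquiv.continuous.measurable (measurableSet_frames.inter measurableSet_boundedFrames))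
    fun X hX => h.ofReal_abs_det_le_frameMeasure_slice hS hT (mem_closedBall_iff_norm.1 hX) mem_s

instance : SMulInvariantMeasure (OrthogonalConj κ) (Matrix κ κ ℝ) (h.frameMeasure.map colProj) where
  measure_preimage_smul Q s hs := by
    have hQ : (ConjAct.ofConjAct Q).1ᴴ * (ConjAct.ofConjAct Q).1 = 1 := (ConjAct.ofConjAct Q).2.1
    have preimage_eq : (colProj : Matrix κ ρ ℝ → _) ⁻¹' ((Q • ·) ⁻¹' s) =
        ((ConjAct.ofConjAct Q).1 * ·) ⁻¹' (colProj ⁻¹' s) := by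
      ext G
      rw [Set.mem_preimage, Set.mem_preimage, Set.mem_preimage, Set.mem_preimage,
        colProj_isometry_mul hQ]
      rfl
    rw [Measure.map_apply measurable_colProj (measurable_const_smul Q hs),
      Measure.map_apply measurable_colProj hs, preimage_eq,
      (h.measurePreserving_mul_frameMeasure hQ).measure_preimage
        (measurable_colProj hs).nullMeasurableSet]

theorem ae_mem_orbit_map_frameMeasure :
    ∀ᵐ P ∂h.frameMeasure.map colProj, P ∈ MulAction.orbit (OrthogonalConj κ) (J * Jᴴ) := by
  have rank_eq : (J * Jᴴ).rank = Fintype.card ρ := by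
    rw [Matrix.rank_self_mul_conjTranspose, ← Matrix.rank_conjTranspose_mul_self, h.left_isometry,
      Matrix.rank_one]
  refine (ae_map_iff measurable_colProj.aemeasurable (measurableSet_orbit _)).2 ?_
  filter_upwards [ae_restrict_mem measurableSet_boundedFrames] with G hG
  exact mem_orbit_of_isStarProjection_of_rank_eq h.isStarProjection (isStarProjection_colProj hG.2)
    ((rank_colProj hG.2).trans rank_eq.symm)

theorem ofReal_abs_det_le_mul_measure (h : IsOrthonormalSplitting J K)
    {μ : Measure (Matrix κ κ ℝ)} [IsProbabilityMeasure μ]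
    [SMulInvariantMeasure (OrthogonalConj κ) (Matrix κ κ ℝ) μ]
    (hμ : ∀ᵐ P ∂μ, P ∈ MulAction.orbit (OrthogonalConj κ) (J * Jᴴ)) {M : Matrix l κ ℝ}
    {S : Matrix ν ν ℝ} {T : Matrix ρ ρ ℝ} {δ : ℝ} (hS : ‖S‖ ≤ 1) (hT : ‖T‖ ≤ 1)
    (hMS : ‖M * K * S‖ ≤ δ) (hMT : ‖M * J * T‖ ≤ δ) :
    ENNReal.ofReal (|S.det| ^ Fintype.card ρ * |T.det| ^ Fintype.card ν) ≤
      ENNReal.ofReal (6 ^ (Fintype.card ρ * (Fintype.card ρ + Fintype.card ν))) *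
        μ {P | ‖M * (J * Jᴴ - P)‖ ≤ 2 * δ} := by
  have mass_le : h.frameMeasure.map colProj Set.univ ≤
      ENNReal.ofReal (6 ^ (Fintype.card ρ * (Fintype.card ρ + Fintype.card ν))) := by
    rw [Measure.map_apply measurable_colProj MeasurableSet.univ]
    exact h.frameMeasure_univ_le
  refine (h.ofReal_abs_det_le_map_frameMeasure hS hT hMS hMT).trans ?_
  rw [eq_smul_of_ae_mem_orbit (G := OrthogonalConj κ) μ (h.frameMeasure.map colProj) hμ
    h.ae_mem_orbit_map_frameMeasure, Measure.smul_apply, smul_eq_mul]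
  exact mul_le_mul_left mass_le _

end IsOrthonormalSplitting

end FrameMeasure

section Contraction

variable {l ι : Type*} [Fintype l] [Fintype ι] [DecidableEq ι]

theorem l2_opNorm_le_of_conjTranspose_mul_self_eq_diagonal {A : Matrix l ι ℝ} {v : ι → ℝ} {c : ℝ}
    (hc : 0 ≤ c) (hA : Aᴴ * A = Matrix.diagonal v) (hv : ∀ i, |v i| ≤ c ^ 2) : ‖A‖ ≤ c := by
  rw [← sq_le_sq₀ (norm_nonneg A) hc, sq, ← Matrix.l2_opNorm_conjTranspose_mul_self, hA,
    Matrix.l2_opNorm_diagonal]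
  exact (pi_norm_le_iff_of_nonneg (sq_nonneg c)).2 hv

theorem exists_contraction_l2_opNorm_mul_le (M : Matrix l ι ℝ) (hM : (Mᴴ * M).IsHermitian) {δ : ℝ}
    (hδ : 0 < δ) :
    ∃ S : Matrix ι ι ℝ, ‖S‖ ≤ 1 ∧ ‖M * S‖ ≤ δ ∧
      |S.det| = ∏ i, √(δ ^ 2 / max (hM.eigenvalues i) (δ ^ 2)) := by
  let U : Matrix ι ι ℝ := hM.eigenvectorUnitary
  let a : ι → ℝ := hM.eigenvalues
  let s : ι → ℝ := fun i => √(δ ^ 2 / max (a i) (δ ^ 2))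
  have hU : Uᴴ * U = 1 := hM.eigenvectorUnitary.2.1
  have max_pos (i : ι) : 0 < max (a i) (δ ^ 2) := lt_max_of_lt_right (by positivity)
  have s_nonneg (i : ι) : 0 ≤ s i := Real.sqrt_nonneg _
  have a_nonneg (i : ι) : 0 ≤ a i :=
    (Matrix.posSemidef_conjTranspose_mul_self M).eigenvalues_nonneg i
  have s_sq (i : ι) : s i * s i = δ ^ 2 / max (a i) (δ ^ 2) :=
    Real.mul_self_sqrt (div_nonneg (sq_nonneg δ) (max_pos i).le)
  refine ⟨U * Matrix.diagonal s, ?_, ?_, ?_⟩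
  · have gram_eq : (U * Matrix.diagonal s)ᴴ * (U * Matrix.diagonal s) =
        Matrix.diagonal fun i => s i * s i := by
      rw [Matrix.conjTranspose_mul, Matrix.mul_assoc, ← Matrix.mul_assoc Uᴴ, hU, Matrix.one_mul,
        Matrix.diagonal_conjTranspose, star_trivial, Matrix.diagonal_mul_diagonal]
    refine l2_opNorm_le_of_conjTranspose_mul_self_eq_diagonal zero_le_one gram_eq fun i => ?_
    rw [abs_of_nonneg (mul_self_nonneg _), s_sq, one_pow, div_le_one (max_pos i)]
    exact le_max_right _ _
  · have gram_eq : (M * (U * Matrix.diagonal s))ᴴ * (M * (U * Matrix.diagonal s)) =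
        Matrix.diagonal fun i => s i * (a i * s i) :=
      calc _ = (Matrix.diagonal s)ᴴ * (Uᴴ * (Mᴴ * M * U)) * Matrix.diagonal s := by
            simp only [Matrix.conjTranspose_mul, Matrix.mul_assoc]
        _ = _ := by
            rw [mul_eigenvectorUnitary hM, ← Matrix.mul_assoc Uᴴ, hU, Matrix.one_mul,
              Matrix.diagonal_conjTranspose, star_trivial, Matrix.mul_assoc,
              Matrix.diagonal_mul_diagonal, Matrix.diagonal_mul_diagonal]
            rfl
    refine l2_opNorm_le_of_conjTranspose_mul_self_eq_diagonal hδ.le gram_eq fun i => ?_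
    rw [abs_of_nonneg (mul_nonneg (s_nonneg i) (mul_nonneg (a_nonneg i) (s_nonneg i))),
      mul_left_comm, s_sq, mul_div_left_comm]
    exact mul_le_of_le_one_right (sq_nonneg δ) ((div_le_one (max_pos i)).2 (le_max_left _ _))
  · rw [Matrix.det_mul, Matrix.det_diagonal, abs_mul, abs_det_of_conjTranspose_mul_self hU, one_mul,
      Finset.abs_prod]
    exact Finset.prod_congr rfl fun i _ => abs_of_nonneg (s_nonneg i)

end Contraction

section Interlacing

variable {κ ι : Type*} [Fintype κ] [DecidableEq κ] [Fintype ι] [DecidableEq ι]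

/- Restricted to the coordinates with `0 < a i`, the left-hand side is positive definite and bounded
by the compression of `diagonal (max v 0)`, whose rank is the number of positive `v j`. -/
theorem card_pos_le_card_pos_of_conjTranspose_mul_diagonal_mul {N : Matrix κ ι ℝ} {v : κ → ℝ}
    {a : ι → ℝ} (h : Nᴴ * Matrix.diagonal v * N = Matrix.diagonal a) :
    Fintype.card {i // 0 < a i} ≤ Fintype.card {j // 0 < v j} := by
  let e : {i // 0 < a i} → ι := Subtype.val
  let R : Matrix κ {i // 0 < a i} ℝ := N.submatrix id e
  let E : Matrix κ κ ℝ := Matrix.diagonal fun j => max (v j) 0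
  have compression_eq : Rᴴ * Matrix.diagonal v * R = Matrix.diagonal (a ∘ e) := by
    rw [← Matrix.submatrix_diagonal _ _ Subtype.val_injective, ← h]
    rfl
  have posDef_compression : (Rᴴ * E * R).PosDef := by
    have split : Rᴴ * E * R = Matrix.diagonal (a ∘ e) +
        Rᴴ * Matrix.diagonal (fun j => max (v j) 0 - v j) * R := by
      rw [← compression_eq, ← Matrix.add_mul, ← Matrix.mul_add, Matrix.diagonal_add]
      simp only [add_sub_cancel, E]
    rw [split]
    refine (Matrix.PosDef.diagonal fun i => i.2).add_posSemidef
      (Matrix.PosSemidef.conjTranspose_mul_mul_same (.diagonal fun j => ?_) R)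
    exact sub_nonneg.2 (le_max_left _ _)
  calc Fintype.card {i // 0 < a i} = (Rᴴ * E * R).rank :=
        (Matrix.rank_of_isUnit _ posDef_compression.isUnit).symm
    _ ≤ E.rank := (Matrix.rank_mul_le_left _ _).trans (Matrix.rank_mul_le_right _ _)
    _ = Fintype.card {j // 0 < v j} := by
      rw [Matrix.rank_diagonal]
      exact Fintype.card_congr (Equiv.subtypeEquivRight fun j => by simp)

theorem card_lt_eigenvalues_le_of_compression {Sig : Matrix κ κ ℝ} (hSig : Sig.IsHermitian)
    {W : Matrix κ ι ℝ} (hW : Wᴴ * W = 1) (hA : (Wᴴ * Sig * W).IsHermitian) (t : ℝ) :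
    Fintype.card {i // t < hA.eigenvalues i} ≤ Fintype.card {j // t < hSig.eigenvalues j} := by
  let U : Matrix ι ι ℝ := hA.eigenvectorUnitary
  let V : Matrix κ κ ℝ := hSig.eigenvectorUnitary
  let D : Matrix κ κ ℝ := Matrix.diagonal hSig.eigenvalues
  have hU : Uᴴ * U = 1 := hA.eigenvectorUnitary.2.1
  have hV : V * Vᴴ = 1 := hSig.eigenvectorUnitary.2.2
  have spectral : V * D * Vᴴ = Sig :=
    calc V * D * Vᴴ = Sig * V * Vᴴ := congrArg (· * Vᴴ) (mul_eigenvectorUnitary hSig).symm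
      _ = Sig := by rw [Matrix.mul_assoc, hV, Matrix.mul_one]
  have hVU : (Vᴴ * W * U)ᴴ * (Vᴴ * W * U) = 1 :=
    calc _ = Uᴴ * (Wᴴ * (V * Vᴴ) * W) * U := by
          simp only [Matrix.conjTranspose_mul, Matrix.conjTranspose_conjTranspose,
            Matrix.mul_assoc]
      _ = 1 := by rw [hV, Matrix.mul_one, hW, Matrix.mul_one, hU]
  have compression_eq : (Vᴴ * W * U)ᴴ * D * (Vᴴ * W * U) = Matrix.diagonal hA.eigenvalues :=
    calc _ = Uᴴ * (Wᴴ * (V * D * Vᴴ) * W) * U := by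
          simp only [Matrix.conjTranspose_mul, Matrix.conjTranspose_conjTranspose,
            Matrix.mul_assoc]
      _ = Matrix.diagonal hA.eigenvalues := by
          rw [spectral, Matrix.mul_assoc, mul_eigenvectorUnitary hA, ← Matrix.mul_assoc, hU,
            Matrix.one_mul]
          rfl
  have shift_eq : (Vᴴ * W * U)ᴴ * Matrix.diagonal (fun j => hSig.eigenvalues j - t) *
      (Vᴴ * W * U) = Matrix.diagonal fun i => hA.eigenvalues i - t := by
    rw [← Matrix.diagonal_sub, ← Matrix.diagonal_sub, Matrix.mul_sub, Matrix.sub_mul,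
      compression_eq, ← Matrix.smul_one_eq_diagonal t, ← Matrix.smul_one_eq_diagonal t,
      Matrix.mul_smul, Matrix.smul_mul, Matrix.mul_one, hVU]
  simpa only [sub_pos] using card_pos_le_card_pos_of_conjTranspose_mul_diagonal_mul shift_eq

variable {d n : ℕ}

theorem antitone_eigDesc (A : Matrix (Fin n) (Fin n) ℝ) : Antitone (eigDesc A) := by
  intro i j hij
  by_cases hA : A.IsHermitian
  · rw [eigDesc, dif_pos hA]
    exact Tuple.monotone_sort hA.eigenvalues (Fin.rev_le_rev.2 hij)
  · rw [eigDesc, dif_neg hA]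
    exact le_rfl

theorem exists_perm_eigDesc_eq {A : Matrix (Fin n) (Fin n) ℝ} (hA : A.IsHermitian) :
    ∃ σ : Equiv.Perm (Fin n), ∀ k, eigDesc A k = hA.eigenvalues (σ k) :=
  ⟨Fin.revPerm.trans (Tuple.sort hA.eigenvalues), fun k => by
    rw [eigDesc, dif_pos hA]
    rfl⟩

theorem eigDesc_compression_le {Sig : Matrix (Fin d) (Fin d) ℝ} (hSig : Sig.IsHermitian)
    {W : Matrix (Fin d) (Fin n) ℝ} (hW : Wᴴ * W = 1) (hnd : n ≤ d) (k : Fin n) :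
    eigDesc (Wᴴ * Sig * W) k ≤ eigDesc Sig (Fin.castLE hnd k) := by
  have hA : (Wᴴ * Sig * W).IsHermitian := Matrix.isHermitian_conjTranspose_mul_mul W hSig
  obtain ⟨σ, hσ⟩ := exists_perm_eigDesc_eq hA
  obtain ⟨τ, hτ⟩ := exists_perm_eigDesc_eq hSig
  by_contra! hlt
  let t := eigDesc Sig (Fin.castLE hnd k)
  have above_compression : k + 1 ≤ Fintype.card {i // t < hA.eigenvalues i} := by
    rw [← Fintype.card_congr (σ.subtypeEquiv fun i => by rw [hσ] :
      {i // t < eigDesc (Wᴴ * Sig * W) i} ≃ _), Fintype.card_subtype, ← Fin.card_Iic]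
    exact Finset.card_le_card fun i hi => Finset.mem_filter.2
      ⟨Finset.mem_univ i, hlt.trans_le (antitone_eigDesc _ (Finset.mem_Iic.1 hi))⟩
  have above_Sig : Fintype.card {j // t < hSig.eigenvalues j} ≤ k := by
    rw [← Fintype.card_congr (τ.subtypeEquiv fun j => by rw [hτ] :
      {j // t < eigDesc Sig j} ≃ _), Fintype.card_subtype, ← Fin.val_castLE hnd k, ← Fin.card_Iio]
    exact Finset.card_le_card fun j hj => Finset.mem_Iio.2
      ((antitone_eigDesc Sig).reflect_lt (Finset.mem_filter.1 hj).2)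
  exact absurd (card_lt_eigenvalues_le_of_compression hSig hW hA t) (by omega)

theorem sum_eigenvalues_compression_le {Sig : Matrix (Fin d) (Fin d) ℝ} (hSig : Sig.IsHermitian)
    {W : Matrix (Fin d) (Fin n) ℝ} (hW : Wᴴ * W = 1) (hnd : n ≤ d)
    (hA : (Wᴴ * Sig * W).IsHermitian) {f : ℝ → ℝ} (hf : Monotone f) :
    ∑ i, f (hA.eigenvalues i) ≤
      ∑ k ∈ Finset.univ.filter (fun k : Fin d => (k : ℕ) < n), f (eigDesc Sig k) := by
  obtain ⟨σ, hσ⟩ := exists_perm_eigDesc_eq hA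
  calc ∑ i, f (hA.eigenvalues i) = ∑ i, f (eigDesc (Wᴴ * Sig * W) i) := by
        simp only [hσ]
        exact (Equiv.sum_comp σ fun i => f (hA.eigenvalues i)).symm
    _ ≤ ∑ i, f (eigDesc Sig (Fin.castLE hnd i)) :=
        Finset.sum_le_sum fun i _ => hf (eigDesc_compression_le hSig hW hnd i)
    _ = ∑ k ∈ Finset.univ.filter (fun k : Fin d => (k : ℕ) < n), f (eigDesc Sig k) := by
        refine Finset.sum_bij (fun i _ => Fin.castLE hnd i) ?_ ?_ ?_ ?_
        · exact fun i _ => Finset.mem_filter.2 ⟨Finset.mem_univ _, i.2⟩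
        · exact fun i _ j _ hij => Fin.castLE_injective hnd hij
        · exact fun k hk => ⟨⟨k, (Finset.mem_filter.1 hk).2⟩, Finset.mem_univ _, rfl⟩
        · exact fun i _ => rfl

end Interlacing

section LogVolume

variable {d : ℕ} {c ε : ℝ}

/-- The sum in the covering exponent: `∑ log (c * max l_k ε² / ε²)` over the first `n` entries of
the list `l` of eigenvalues. Up to the choice of `c`, half of it is the logarithm of the volume
lost by an `n`-dimensional ball when it is shrunk so that the quadratic form with eigenvalues
`l_k` is at most `ε²` on it. -/
def coveringLogSum (c ε : ℝ) (l : Fin d → ℝ) (n : ℕ) : ℝ :=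
  ∑ k ∈ Finset.univ.filter (fun k : Fin d => (k : ℕ) < n), Real.log (c * max (l k) (ε ^ 2) / ε ^ 2)

theorem coveringLogSum_mul {a b : ℝ} (ha : 0 < a) (hb : 0 < b) (hε : 0 < ε) (l : Fin d → ℝ) {n : ℕ}
    (hnd : n ≤ d) : coveringLogSum (a * b) ε l n = n * Real.log a + coveringLogSum b ε l n := by
  have log_mul (k : Fin d) : Real.log (a * b * max (l k) (ε ^ 2) / ε ^ 2) =
      Real.log a + Real.log (b * max (l k) (ε ^ 2) / ε ^ 2) := by
    have : 0 < max (l k) (ε ^ 2) := lt_max_of_lt_right (by positivity)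
    rw [mul_assoc, mul_div_assoc, Real.log_mul ha.ne' (by positivity)]
  rw [coveringLogSum, Finset.sum_congr rfl fun k _ => log_mul k, Finset.sum_add_distrib,
    Finset.sum_const, Fin.card_filter_val_lt, min_eq_right hnd, nsmul_eq_mul, coveringLogSum]

theorem monotone_log_mul_max_div (hc : 0 < c) (hε : 0 < ε) :
    Monotone fun x : ℝ => Real.log (c * max x (ε ^ 2) / ε ^ 2) := fun x y hxy => by
  have : 0 < max x (ε ^ 2) := lt_max_of_lt_right (by positivity)
  exact Real.log_le_log (by positivity) (by gcongr)

theorem exp_neg_half_log_le_sqrt (hε : 0 < ε) (x : ℝ) :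
    Real.exp (-Real.log (4 * max x (ε ^ 2) / ε ^ 2) / 2) ≤
      √((ε / 2) ^ 2 / max x ((ε / 2) ^ 2)) := by
  have max_pos : 0 < max x ((ε / 2) ^ 2) := lt_max_of_lt_right (by positivity)
  have max_le : max x ((ε / 2) ^ 2) ≤ max x (ε ^ 2) := by
    gcongr
    exact half_le_self hε.le
  rw [Real.exp_half, Real.exp_neg,
    Real.exp_log (div_pos (mul_pos four_pos (max_pos.trans_le max_le)) (by positivity))]
  refine Real.sqrt_le_sqrt ?_
  calc (4 * max x (ε ^ 2) / ε ^ 2)⁻¹ = (ε / 2) ^ 2 / max x (ε ^ 2) := by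
        field_simp
        norm_num
    _ ≤ (ε / 2) ^ 2 / max x ((ε / 2) ^ 2) := by gcongr

theorem exists_contraction_compression {l : Type*} [Fintype l] (M : Matrix l (Fin d) ℝ) {n : ℕ}
    (hnd : n ≤ d) {W : Matrix (Fin d) (Fin n) ℝ} (hW : Wᴴ * W = 1) (hε : 0 < ε) :
    ∃ S : Matrix (Fin n) (Fin n) ℝ, ‖S‖ ≤ 1 ∧ ‖M * W * S‖ ≤ ε / 2 ∧
      Real.exp (-coveringLogSum 4 ε (eigDesc (Mᴴ * M)) n / 2) ≤ |S.det| := by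
  have gram_eq : (M * W)ᴴ * (M * W) = Wᴴ * (Mᴴ * M) * W := by
    simp only [Matrix.conjTranspose_mul, Matrix.mul_assoc]
  have hMW := Matrix.isHermitian_conjTranspose_mul_self (M * W)
  obtain ⟨S, norm_S_le, norm_mul_le, abs_det_eq⟩ :=
    exists_contraction_l2_opNorm_mul_le (M * W) hMW (half_pos hε)
  refine ⟨S, norm_S_le, norm_mul_le, ?_⟩
  let f (x : ℝ) : ℝ := Real.log (4 * max x (ε ^ 2) / ε ^ 2)
  have sum_le : ∑ i, f (hMW.eigenvalues i) ≤ coveringLogSum 4 ε (eigDesc (Mᴴ * M)) n := by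
    simp only [gram_eq]
    exact sum_eigenvalues_compression_le (Matrix.isHermitian_conjTranspose_mul_self M) hW hnd
      (gram_eq ▸ hMW) (monotone_log_mul_max_div four_pos hε)
  calc Real.exp (-coveringLogSum 4 ε (eigDesc (Mᴴ * M)) n / 2)
      ≤ Real.exp (∑ i, -f (hMW.eigenvalues i) / 2) := by
        rw [← Finset.sum_div, Finset.sum_neg_distrib]
        gcongr
    _ = ∏ i, Real.exp (-f (hMW.eigenvalues i) / 2) := Real.exp_sum _ _
    _ ≤ |S.det| := by
        rw [abs_det_eq]
        gcongr
        exact exp_neg_half_log_le_sqrt hε _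

end LogVolume

section Covering

variable {d r n : ℕ} {ε : ℝ}

theorem six_pow_mul_exp_neg_coveringLogSum_le (hrn : r ≤ n) (hd : r + n = d) {l : Fin d → ℝ}
    (hε : 0 < ε) {s t : ℝ} (hs : Real.exp (-coveringLogSum 4 ε l n / 2) ≤ s)
    (ht : Real.exp (-coveringLogSum 4 ε l r / 2) ≤ t) :
    6 ^ (r * (r + n)) * Real.exp
        (-(n / 2 * coveringLogSum 144 ε l r + r / 2 * coveringLogSum 144 ε l n)) ≤
      s ^ r * t ^ n := by
  have s_nonneg : 0 ≤ s := (Real.exp_pos _).le.trans hs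
  have split_const {k : ℕ} (hk : k ≤ d) :
      coveringLogSum 144 ε l k = 2 * k * Real.log 6 + coveringLogSum 4 ε l k := by
    rw [show (144 : ℝ) = 6 ^ 2 * 4 by norm_num,
      coveringLogSum_mul (by norm_num) four_pos hε l hk, Real.log_pow]
    push_cast
    ring
  have six_pow_le : (6 : ℝ) ^ (r * (r + n)) ≤ Real.exp (2 * r * n * Real.log 6) := by
    calc (6 : ℝ) ^ (r * (r + n)) ≤ 6 ^ (2 * r * n) :=
          pow_le_pow_right₀ (by norm_num) (by nlinarith)
      _ = Real.exp (2 * r * n * Real.log 6) := by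
          rw [← Real.rpow_natCast, Real.rpow_def_of_pos (by norm_num), mul_comm]
          push_cast
          rfl
  calc _ ≤ Real.exp (2 * r * n * Real.log 6) * Real.exp
          (-(n / 2 * coveringLogSum 144 ε l r + r / 2 * coveringLogSum 144 ε l n)) := by gcongr
    _ = Real.exp (-coveringLogSum 4 ε l n / 2) ^ r *
          Real.exp (-coveringLogSum 4 ε l r / 2) ^ n := by
        rw [← Real.exp_nat_mul, ← Real.exp_nat_mul, ← Real.exp_add, ← Real.exp_add,
          split_const (show r ≤ d by omega), split_const (show n ≤ d by omega)]
        ring_nf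
    _ ≤ s ^ r * t ^ n := by gcongr

namespace IsOrthonormalSplitting

variable {l : Type*} [Fintype l] {J : Matrix (Fin d) (Fin r) ℝ} {K : Matrix (Fin d) (Fin n) ℝ}
  {μ : Measure (Matrix (Fin d) (Fin d) ℝ)} [IsProbabilityMeasure μ]
  [SMulInvariantMeasure (OrthogonalConj (Fin d)) (Matrix (Fin d) (Fin d) ℝ) μ]

theorem ofReal_exp_le_measure_of_le (h : IsOrthonormalSplitting J K) (hd : r + n = d) (hrn : r ≤ n)
    (hμ : ∀ᵐ P ∂μ, P ∈ MulAction.orbit (OrthogonalConj (Fin d)) (J * Jᴴ)) (M : Matrix l (Fin d) ℝ)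
    (hε : 0 < ε) :
    ENNReal.ofReal (Real.exp (-(n / 2 * coveringLogSum 144 ε (eigDesc (Mᴴ * M)) r +
        r / 2 * coveringLogSum 144 ε (eigDesc (Mᴴ * M)) n))) ≤
      μ {P | ‖M * (J * Jᴴ - P)‖ ≤ ε} := by
  obtain ⟨S, hS, hMS, exp_le_det_S⟩ :=
    exists_contraction_compression M (show n ≤ d by omega) h.right_isometry hε
  obtain ⟨T, hT, hMT, exp_le_det_T⟩ :=
    exists_contraction_compression M (show r ≤ d by omega) h.left_isometry hε
  have det_le := h.ofReal_abs_det_le_mul_measure hμ hS hT hMS hMT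
  simp only [Fintype.card_fin, mul_div_cancel₀ ε two_ne_zero] at det_le
  have exp_le := ENNReal.ofReal_le_ofReal
    (six_pow_mul_exp_neg_coveringLogSum_le hrn hd hε exp_le_det_S exp_le_det_T)
  rw [ENNReal.ofReal_mul (by positivity)] at exp_le
  exact (ENNReal.mul_le_mul_iff_right (by positivity) ENNReal.ofReal_ne_top).1
    (exp_le.trans det_le)

theorem ofReal_exp_le_measure (h : IsOrthonormalSplitting J K) (hd : r + n = d)
    (hμ : ∀ᵐ P ∂μ, P ∈ MulAction.orbit (OrthogonalConj (Fin d)) (J * Jᴴ)) (M : Matrix l (Fin d) ℝ)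
    (hε : 0 < ε) :
    ENNReal.ofReal (Real.exp (-(n / 2 * coveringLogSum 144 ε (eigDesc (Mᴴ * M)) r +
        r / 2 * coveringLogSum 144 ε (eigDesc (Mᴴ * M)) n))) ≤
      μ {P | ‖M * (J * Jᴴ - P)‖ ≤ ε} := by
  rcases le_total r n with hrn | hnr
  · exact h.ofReal_exp_le_measure_of_le hd hrn hμ M hε
  let compl : Matrix (Fin d) (Fin d) ℝ → Matrix (Fin d) (Fin d) ℝ := fun P => 1 - P
  have measurable_compl : Measurable compl := (continuous_const.sub continuous_id).measurable
  have compl_JJ : 1 - J * Jᴴ = K * Kᴴ := sub_eq_of_eq_add' h.complete.symm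
  have : IsProbabilityMeasure (μ.map compl) :=
    Measure.isProbabilityMeasure_map measurable_compl.aemeasurable
  have : SMulInvariantMeasure (OrthogonalConj (Fin d)) (Matrix (Fin d) (Fin d) ℝ) (μ.map compl) :=
    smulInvariantMeasure_map μ compl (fun g P => (orthogonalConj_smul_one_sub g P).symm)
      measurable_compl
  have mem_orbit : ∀ᵐ P ∂μ.map compl, P ∈ MulAction.orbit (OrthogonalConj (Fin d)) (K * Kᴴ) := by
    refine (ae_map_iff measurable_compl.aemeasurable (measurableSet_orbit _)).2 ?_
    filter_upwards [hμ]
    rintro _ ⟨g, rfl⟩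
    exact ⟨g, compl_JJ ▸ orthogonalConj_smul_one_sub g _⟩
  have measurableSet_near : MeasurableSet {P | ‖M * (K * Kᴴ - P)‖ ≤ ε} :=
    (isClosed_le (by fun_prop) continuous_const).measurableSet
  have key := h.symm.ofReal_exp_le_measure_of_le ((add_comm n r).trans hd) hnr mem_orbit M hε
  rw [Measure.map_apply measurable_compl measurableSet_near, add_comm] at key
  refine key.trans_eq (congrArg μ (Set.ext fun P => ?_))
  rw [Set.mem_preimage, Set.mem_ofPred_eq, Set.mem_ofPred_eq, ← compl_JJ, sub_sub_sub_cancel_left,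
    ← norm_neg, ← Matrix.mul_neg, neg_sub]

end IsOrthonormalSplitting

theorem opNorm_le_l2_opNorm {m k : Type*} [Fintype m] [Fintype k] [DecidableEq k]
    (A : Matrix m k ℝ) : opNorm A ≤ ‖A‖ := by
  refine csSup_le ⟨_, 0, by simp, rfl⟩ ?_
  rintro _ ⟨x, hx, rfl⟩
  have norm_x_le : ‖WithLp.toLp 2 x‖ ≤ 1 := by
    simpa [EuclideanSpace.norm_eq, Real.sqrt_le_one] using hx
  calc √(∑ i, (A *ᵥ x) i ^ 2) = ‖WithLp.toLp 2 (A *ᵥ x)‖ := by simp [EuclideanSpace.norm_eq]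
    _ ≤ ‖A‖ * ‖WithLp.toLp 2 x‖ := A.l2_opNorm_mulVec (WithLp.toLp 2 x)
    _ ≤ ‖A‖ := mul_le_of_le_one_right (norm_nonneg A) norm_x_le

theorem negLog_le_ofReal {m : ℝ≥0∞} (hm : m ≠ ⊤) {R : ℝ}
    (h : ENNReal.ofReal (Real.exp (-R)) ≤ m) : negLog m ≤ ENNReal.ofReal R := by
  have m_pos : 0 < m := (ENNReal.ofReal_pos.2 (Real.exp_pos _)).trans_le h
  rw [negLog, if_neg m_pos.ne', one_div, Real.log_inv]
  refine ENNReal.ofReal_le_ofReal (neg_le.1 ?_)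
  exact (Real.le_log_iff_exp_le (ENNReal.toReal_pos m_pos.ne' hm)).2
    ((ENNReal.ofReal_le_iff_le_toReal hm).1 h)

theorem isStarProjection_of_isSymm {ι : Type*} [Fintype ι] {P : Matrix ι ι ℝ} (hsymm : P.IsSymm)
    (hidem : P * P = P) : IsStarProjection P :=
  ⟨hidem, (Matrix.conjTranspose_eq_transpose_of_trivial P).trans hsymm⟩

end Covering

end GrassmannianCovering

/-- **Ellipsoidal Covering of the Grassmannian (Lemma).** -/
theorem ellipsoidal_covering_of_grassmannian :
    ∃ C : ℝ, 0 < C ∧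
      ∀ (d r : ℕ), 1 ≤ r → r ≤ d →
      ∀ (μ : Measure (Matrix (Fin d) (Fin d) ℝ)), IsProbabilityMeasure μ →
      -- `μ` lives on the Grassmannian: the rank-`r` orthogonal projection matrices
      μ {P | ¬ (P.IsSymm ∧ P * P = P ∧ P.rank = r)} = 0 →
      -- `μ` is invariant under conjugation by every orthogonal matrix
      (∀ Q : Matrix (Fin d) (Fin d) ℝ, Q * Qᵀ = 1 → Qᵀ * Q = 1 →
        Measure.map (fun P => Q * P * Qᵀ) μ = μ) →
      ∀ P₀ : Matrix (Fin d) (Fin d) ℝ, P₀.IsSymm → P₀ * P₀ = P₀ → P₀.rank = r →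
      ∀ ε : ℝ, 0 < ε →
      ∀ (Sig : Matrix (Fin d) (Fin d) ℝ) (hSig : Sig.PosSemidef),
      negLog (μ {P | opNorm (CFC.sqrt Sig * (P₀ - P)) ≤ ε}) ≤
        ENNReal.ofReal
          (((d - r : ℕ) : ℝ) / 2 *
              ∑ k ∈ Finset.univ.filter (fun k : Fin d => (k : ℕ) < r),
                Real.log (C * max (eigDesc Sig k) (ε ^ 2) / ε ^ 2) +
            (r : ℝ) / 2 *
              ∑ k ∈ Finset.univ.filter (fun k : Fin d => (k : ℕ) < d - r),
                Real.log (C * max (eigDesc Sig k) (ε ^ 2) / ε ^ 2)) := by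
  refine ⟨144, by norm_num, fun d r _ hrd μ _ hμ hinv P₀ hsymm hidem hrank ε hε Sig hSig => ?_⟩
  have : SMulInvariantMeasure (OrthogonalConj (Fin d)) (Matrix (Fin d) (Fin d) ℝ) μ :=
    smulInvariantMeasure_of_map_mul_mul_transpose hinv
  have projection : IsStarProjection P₀ := isStarProjection_of_isSymm hsymm hidem
  obtain ⟨J, K, h, rfl⟩ := exists_isOrthonormalSplitting_of_isStarProjection (ν := Fin (d - r))
    projection (hrank.trans (Fintype.card_fin r).symm) (by simp [hrd])
  have mem_orbit : ∀ᵐ P ∂μ, P ∈ MulAction.orbit (OrthogonalConj (Fin d)) (J * Jᴴ) := by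
    filter_upwards [ae_iff.2 hμ] with P hP
    exact mem_orbit_of_isStarProjection_of_rank_eq projection
      (isStarProjection_of_isSymm hP.1 hP.2.1) (hP.2.2.trans hrank.symm)
  have gram_sqrt : (CFC.sqrt Sig)ᴴ * CFC.sqrt Sig = Sig := by
    rw [(Matrix.nonneg_iff_posSemidef.1 (CFC.sqrt_nonneg Sig)).1,
      CFC.sqrt_mul_sqrt_self Sig hSig.nonneg]
  have exp_le := h.ofReal_exp_le_measure (Nat.add_sub_cancel' hrd) mem_orbit (CFC.sqrt Sig) hε
  rw [gram_sqrt] at exp_le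
  refine negLog_le_ofReal (measure_ne_top μ _) (exp_le.trans (measure_mono fun P hP => ?_))
  exact (opNorm_le_l2_opNorm _).trans hP

end
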